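/- Let φ = (φ^1, φ^2) : ℝ³ → ℝ² be a smooth Riemannian submersion, i.e. at every point of ℝ³ the gradients ∇φ^1 and ∇φ^2 are orthonormal. If φ pulls back every harmonic function to a biharmonic function (i.e. for every open V ⊆ ℝ² and every harmonic f : V → ℝ, f ∘ φ is biharmonic on φ^{-1}(V)), then φ is an orthogonal projection up to isometries: there exist a Euclidean isometry σ : ℝ³ → ℝ³ and a Euclidean isometry τ : ℝ² → ℝ² such that (τ ∘ φ ∘ σ)(x, y, z) = (x, y) for all (x, y, z) ∈ ℝ³. -/

import Mathlib

open scoped BigOperators RealInnerProductSpace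

noncomputable section

/-- `m`-dimensional Euclidean space. -/
abbrev E (m : ℕ) := EuclideanSpace ℝ (Fin m)

/-- The Euclidean Laplacian of a real-valued function: the sum of the second
partial derivatives in the coordinate directions. -/
noncomputable def lap {m : ℕ} (f : E m → ℝ) (x : E m) : ℝ :=
  ∑ i : Fin m,
    fderiv ℝ (fun y => fderiv ℝ f y (EuclideanSpace.single i 1)) x (EuclideanSpace.single i 1)

/-- The Euclidean Laplacian of a complex-valued function (applied componentwise). -/
noncomputable def lapC {m : ℕ} (f : E m → ℂ) (x : E m) : ℂ :=
  ∑ i : Fin m,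
    fderiv ℝ (fun y => fderiv ℝ f y (EuclideanSpace.single i 1)) x (EuclideanSpace.single i 1)

/-- A (smooth) harmonic function on a set: `Δ f = 0` there. -/
def HarmonicOn {m : ℕ} (f : E m → ℝ) (s : Set (E m)) : Prop :=
  ContDiffOn ℝ (⊤ : ℕ∞) f s ∧ ∀ x ∈ s, lap f x = 0

/-- A (smooth) biharmonic function on a set: `Δ (Δ f) = 0` there. -/
def BiharmonicOn {m : ℕ} (f : E m → ℝ) (s : Set (E m)) : Prop :=
  ContDiffOn ℝ (⊤ : ℕ∞) f s ∧ ∀ x ∈ s, lap (lap f) x = 0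

/-- A generalized harmonic morphism on `U`: it pulls back every harmonic function on an
open set `V` of the target to a biharmonic function on `U ∩ φ ⁻¹' V`. -/
def IsGHM {m n : ℕ} (φ : E m → E n) (U : Set (E m)) : Prop :=
  ∀ V : Set (E n), IsOpen V → ∀ f : E n → ℝ, HarmonicOn f V →
    BiharmonicOn (f ∘ φ) (U ∩ φ ⁻¹' V)

/-- A harmonic morphism on `U`: it pulls back harmonic functions to harmonic functions. -/
def IsHM {m n : ℕ} (φ : E m → E n) (U : Set (E m)) : Prop :=
  ∀ V : Set (E n), IsOpen V → ∀ f : E n → ℝ, HarmonicOn f V →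
    HarmonicOn (f ∘ φ) (U ∩ φ ⁻¹' V)

/-- A biharmonic morphism on `U`: it pulls back biharmonic functions to biharmonic
functions. -/
def IsBHM {m n : ℕ} (φ : E m → E n) (U : Set (E m)) : Prop :=
  ∀ V : Set (E n), IsOpen V → ∀ f : E n → ℝ, BiharmonicOn f V →
    BiharmonicOn (f ∘ φ) (U ∩ φ ⁻¹' V)

/-- Horizontally weakly conformal on `U`: there is `λ : U → [0,∞)` with
`⟪∇φ^α, ∇φ^β⟫ = λ² δ_{αβ}` pointwise on `U`. -/
def IsHWC {m n : ℕ} (φ : E m → E n) (U : Set (E m)) : Prop :=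
  ∃ lam : E m → ℝ, (∀ x, 0 ≤ lam x) ∧
    ∀ x ∈ U, ∀ α β : Fin n,
      ⟪gradient (fun y => φ y α) x, gradient (fun y => φ y β) x⟫ =
        (lam x) ^ 2 * (if α = β then 1 else 0)


theorem aux_two_le : (2 : WithTop ℕ∞) ≤ ((⊤ : ℕ∞) : WithTop ℕ∞) :=
  WithTop.coe_le_coe.mpr (le_top : (2 : ℕ∞) ≤ ⊤)

theorem aux_inner_gradient {u : E 3 → ℝ} (x h : E 3) : ⟪gradient u x, h⟫ = fderiv ℝ u x h := by
  rw [← toDual_gradient]; simp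

theorem aux_gradient_contDiff {u : E 3 → ℝ} (hu : ContDiff ℝ (⊤ : ℕ∞) u) :
    ContDiff ℝ 1 (gradient u) := by
  rw [contDiff_euclidean]
  intro i
  have : (fun x => gradient u x i) = fun x => fderiv ℝ u x (EuclideanSpace.single i 1) := by
    funext x
    rw [← aux_inner_gradient, EuclideanSpace.inner_single_right]; simp
  rw [this]
  have h1 : ContDiff ℝ 1 (fderiv ℝ u) := (hu.of_le aux_two_le).fderiv_right (by norm_num)
  exact h1.clm_apply contDiff_const

theorem aux_hess_symm {u : E 3 → ℝ} (hu : ContDiff ℝ (⊤ : ℕ∞) u) (x h k : E 3) :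
    ⟪fderiv ℝ (gradient u) x h, k⟫ = ⟪fderiv ℝ (gradient u) x k, h⟫ := by
  have key : ∀ h k : E 3, ⟪fderiv ℝ (gradient u) x h, k⟫ = fderiv ℝ (fderiv ℝ u) x h k := by
    intro h k
    have hG : DifferentiableAt ℝ (gradient u) x :=
      (aux_gradient_contDiff hu).differentiable (by norm_num) x
    have h1 : ContDiff ℝ 1 (fderiv ℝ u) := (hu.of_le aux_two_le).fderiv_right (by norm_num)
    have hD : DifferentiableAt ℝ (fderiv ℝ u) x := h1.differentiable (by norm_num) x
    have e1 := (hG.hasFDerivAt.inner ℝ (hasFDerivAt_const k x))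
    have e2 := hD.hasFDerivAt.clm_apply (hasFDerivAt_const k x)
    have : (fun y => ⟪gradient u y, k⟫) = fun y => fderiv ℝ u y k := by
      funext y; exact aux_inner_gradient y k
    rw [this] at e1
    have e3 := congrArg (fun L => L h) (e1.unique e2)
    simpa using e3
  rw [key, key]
  exact (hu.contDiffAt.isSymmSndFDerivAt (by simpa using aux_two_le)) h k

theorem aux_hess_grad {u : E 3 → ℝ} (hu : ContDiff ℝ (⊤ : ℕ∞) u)
    (h1 : ∀ x, ⟪gradient u x, gradient u x⟫ = 1) (x : E 3) :
    fderiv ℝ (gradient u) x (gradient u x) = 0 := by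
  have hG : DifferentiableAt ℝ (gradient u) x :=
    (aux_gradient_contDiff hu).differentiable (by norm_num) x
  apply ext_inner_right ℝ
  intro k
  rw [aux_hess_symm hu, inner_zero_left]
  have e1 := hG.hasFDerivAt.inner ℝ hG.hasFDerivAt
  have : (fun y => ⟪gradient u y, gradient u y⟫) = fun _ => (1 : ℝ) := funext h1
  rw [this] at e1
  have e3 := congrArg (fun L => L k) (e1.unique (hasFDerivAt_const (1 : ℝ) x))
  have e4 : ⟪gradient u x, fderiv ℝ (gradient u) x k⟫ +
      ⟪fderiv ℝ (gradient u) x k, gradient u x⟫ = 0 := e3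
  rw [real_inner_comm] at e4
  linarith

/-- The gradient is constant along its own direction. -/
theorem aux_grad_line {u : E 3 → ℝ} (hu : ContDiff ℝ (⊤ : ℕ∞) u)
    (h1 : ∀ x, ⟪gradient u x, gradient u x⟫ = 1) (x : E 3) (c : ℝ) :
    gradient u (x + c • gradient u x) = gradient u x := by
  have hC := aux_gradient_contDiff hu
  set v := gradient u x with hv
  let γ : ℝ → E 3 := fun s => x + s • (c • v)
  have hγ : ∀ s, HasDerivAt γ (c • v) s := fun s => by
    have h := ((hasDerivAt_id s).smul_const (c • v)).const_add x
    rw [one_smul] at h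
    exact h
  have hγc : Continuous γ := by fun_prop
  have hA : Continuous fun s => fderiv ℝ (gradient u) (γ s) :=
    (hC.continuous_fderiv (by norm_num)).comp hγc
  obtain ⟨K, hK⟩ := isCompact_Icc.exists_bound_of_continuousOn
    (s := Set.Icc (0:ℝ) 1) hA.continuousOn
  have hd : ∀ s, HasDerivAt (fun s => gradient u (γ s) - v)
      (fderiv ℝ (gradient u) (γ s) (c • v)) s := fun s =>
    (((hC.differentiable (by norm_num) (γ s)).hasFDerivAt.comp_hasDerivAt s (hγ s)).sub_const v)
  have := eq_zero_of_abs_deriv_le_mul_abs_self_of_eq_zero_right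
    (f := fun s => gradient u (γ s) - v) (K := K * |c|) (a := 0) (b := 1)
    (fun s _ => (hd s).continuousAt.continuousWithinAt)
    (fun s _ => (hd s).hasDerivWithinAt)
    (by simp [γ, ← hv])
    (by
      intro s hs
      have e : fderiv ℝ (gradient u) (γ s) (c • v) =
          - (c • fderiv ℝ (gradient u) (γ s) (gradient u (γ s) - v)) := by
        rw [map_sub, aux_hess_grad hu h1]; simp
      rw [e, norm_neg, norm_smul, Real.norm_eq_abs, mul_comm K, mul_assoc]
      exact mul_le_mul_of_nonneg_left
        (ContinuousLinearMap.le_of_opNorm_le _ (hK s ⟨hs.1, hs.2.le⟩) _) (abs_nonneg c))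
    1 (by simp)
  simpa [γ, sub_eq_zero] using this

theorem aux_u_line {u : E 3 → ℝ} (hu : ContDiff ℝ (⊤ : ℕ∞) u)
    (h1 : ∀ x, ⟪gradient u x, gradient u x⟫ = 1) (x : E 3) (c : ℝ) :
    u (x + c • gradient u x) = u x + c := by
  have hd : ∀ s : ℝ, HasDerivAt (fun s : ℝ => u (x + s • gradient u x) - s) 0 s := fun s => by
    have hγ : HasDerivAt (fun s : ℝ => x + s • gradient u x) (gradient u x) s := by
      simpa using ((hasDerivAt_id s).smul_const (gradient u x)).const_add x
    have hU : DifferentiableAt ℝ u (x + s • gradient u x) :=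
      hu.differentiable (by simp) _
    have := (hU.hasFDerivAt.comp_hasDerivAt s hγ).sub (hasDerivAt_id s)
    rw [← aux_inner_gradient, aux_grad_line hu h1, h1, sub_self] at this
    exact this
  have := is_const_of_deriv_eq_zero (fun s => (hd s).differentiableAt)
    (fun s => (hd s).deriv) c 0
  simp at this
  linarith

theorem aux_lip {u : E 3 → ℝ} (hu : ContDiff ℝ (⊤ : ℕ∞) u)
    (h1 : ∀ x, ⟪gradient u x, gradient u x⟫ = 1) (x y : E 3) :
    u x - u y ≤ ‖x - y‖ := by
  have := Convex.norm_image_sub_le_of_norm_fderiv_le (𝕜 := ℝ) (f := u) (C := 1) (s := Set.univ)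
    (x := y) (y := x) (fun z _ => hu.differentiable (by simp) z)
    (fun z _ => by
      rw [← toDual_gradient, LinearIsometryEquiv.norm_map]
      have := h1 z
      rw [real_inner_self_eq_norm_sq] at this
      nlinarith [norm_nonneg (gradient u z)])
    convex_univ (Set.mem_univ _) (Set.mem_univ _)
  rw [one_mul] at this
  exact (le_abs_self _).trans this

theorem aux_grad_const {u : E 3 → ℝ} (hu : ContDiff ℝ (⊤ : ℕ∞) u)
    (h1 : ∀ x, ⟪gradient u x, gradient u x⟫ = 1) (x y : E 3) :
    gradient u x = gradient u y := by
  set v := gradient u x with hv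
  set w := gradient u y with hw
  have hb : ∀ t : ℝ, 0 ≤ t → t * (2 - ‖v + w‖) ≤ ‖x - y‖ - (u x - u y) := by
    intro t ht
    have a1 := aux_u_line hu h1 x t
    have a2 := aux_u_line hu h1 y (-t)
    have a3 := aux_lip hu h1 (x + t • v) (y + (-t) • w)
    have a4 : x + t • v - (y + (-t) • w) = (x - y) + t • (v + w) := by module
    rw [a4, a1, a2] at a3
    have a5 := norm_add_le (x - y) (t • (v + w))
    rw [norm_smul, Real.norm_of_nonneg ht] at a5
    linarith
  have h2 : 2 ≤ ‖v + w‖ := by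
    by_contra hlt
    push Not at hlt
    obtain ⟨n, hn⟩ := exists_nat_gt ((‖x - y‖ - (u x - u y)) / (2 - ‖v + w‖))
    rw [div_lt_iff₀ (by linarith)] at hn
    exact absurd (hb n (by positivity)) (not_le.mpr hn)
  have hvv := h1 x
  have hww := h1 y
  rw [← hv] at hvv
  rw [← hw] at hww
  have e1 := norm_add_sq_real v w
  have e2 := norm_sub_sq_real v w
  rw [real_inner_self_eq_norm_sq] at hvv hww
  have : ‖v - w‖ = 0 := by nlinarith [norm_nonneg (v - w)]
  exact sub_eq_zero.mp (norm_eq_zero.mp this)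

theorem aux_affine {u : E 3 → ℝ} (hu : ContDiff ℝ (⊤ : ℕ∞) u)
    (h1 : ∀ x, ⟪gradient u x, gradient u x⟫ = 1) (x : E 3) :
    u x = u 0 + ⟪gradient u 0, x⟫ := by
  have hd : ∀ z, HasFDerivAt (fun z => u z - ⟪gradient u 0, z⟫) (0 : E 3 →L[ℝ] ℝ) z := fun z => by
    have e1 := (hu.differentiable (by simp) z).hasFDerivAt
    have e2 := (innerSL ℝ (gradient u 0)).hasFDerivAt (x := z)
    have e3 := e1.sub e2
    have : fderiv ℝ u z - innerSL ℝ (gradient u 0) = 0 := by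
      ext h
      rw [ContinuousLinearMap.sub_apply, innerSL_apply_apply, ← aux_inner_gradient,
        aux_grad_const hu h1 z 0, sub_self, ContinuousLinearMap.zero_apply]
    rw [this] at e3
    exact e3
  have := is_const_of_fderiv_eq_zero (𝕜 := ℝ) (fun z => (hd z).differentiableAt)
    (fun z => (hd z).fderiv) x 0
  simp only [inner_zero_right] at this
  linarith

/-- a smooth Riemannian submersion `φ : ℝ³ → ℝ²` (the gradients of its
components are orthonormal at every point) which pulls back every harmonic function to
a biharmonic function is, up to Euclidean isometries of domain and target, the
orthogonal projection `(x, y, z) ↦ (x, y)`. -/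
theorem stmt_9 (φ : E 3 → E 2) (hφ : ContDiff ℝ (⊤ : ℕ∞) φ)
    (hsub : ∀ x : E 3,
      ⟪gradient (fun y => φ y 0) x, gradient (fun y => φ y 0) x⟫ = 1 ∧
      ⟪gradient (fun y => φ y 1) x, gradient (fun y => φ y 1) x⟫ = 1 ∧
      ⟪gradient (fun y => φ y 0) x, gradient (fun y => φ y 1) x⟫ = 0)
    (hGHM : IsGHM φ Set.univ) :
    ∃ σ : E 3 ≃ᵢ E 3, ∃ τ : E 2 ≃ᵢ E 2,
      ∀ p : E 3, ∀ i : Fin 2, τ (φ (σ p)) i = p (Fin.castSucc i) := by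
  have hc : ∀ i : Fin 2, ContDiff ℝ (⊤ : ℕ∞) (fun y => φ y i) := contDiff_euclidean.mp hφ
  have A0 := aux_affine (hc 0) (fun x => (hsub x).1)
  have A1 := aux_affine (hc 1) (fun x => (hsub x).2.1)
  obtain ⟨n0, n1, n01⟩ := hsub 0
  set v0 := gradient (fun y => φ y 0) 0
  set v1 := gradient (fun y => φ y 1) 0
  let v : Fin 3 → E 3 := ![v0, v1, 0]
  let s : Set (Fin 3) := {0, 1}
  have hv : Orthonormal ℝ (s.domRestrict v) := by
    rw [orthonormal_iff_ite]
    rintro ⟨i, hi⟩ ⟨j, hj⟩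
    have n10 : ⟪v1, v0⟫ = 0 := by rw [real_inner_comm]; exact n01
    rcases hi with rfl | hi <;> rcases hj with rfl | hj
    · simpa [v] using n0
    · cases hj; simpa [v, Subtype.ext_iff] using n01
    · cases hi; simpa [v, Subtype.ext_iff] using n10
    · cases hi; cases hj; simpa [v] using n1
  obtain ⟨b, hb⟩ := hv.exists_orthonormalBasis_extension_of_card_eq (by simp)
  have b0 : b 0 = v0 := hb 0 (by simp [s])
  have b1 : b 1 = v1 := hb 1 (by simp [s])
  refine ⟨b.repr.symm.toIsometryEquiv, IsometryEquiv.subRight (φ 0), fun p i => ?_⟩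
  have hr : ∀ j : Fin 3, ⟪b j, b.repr.symm p⟫ = p j := fun j => by
    rw [← b.repr_apply_apply]; simp
  fin_cases i
  · have := hr 0
    have h := A0 (b.repr.symm p)
    rw [b0] at this
    rw [this] at h
    simpa [sub_eq_iff_eq_add'] using h
  · have := hr 1
    have h := A1 (b.repr.symm p)
    rw [b1] at this
    rw [this] at h
    simpa [sub_eq_iff_eq_add'] using h
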